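/- Let L be a Borel probability measure on (0,∞) with ∫ λ² dL(λ) < ∞, let β ≥ 0, and let sℓ, ss, μℓ, μs ≥ 0 be real numbers. Define R(t) := sℓ·∫ (λt − 𝔄(t,λ,β)) dL(λ) + ss·∫ 𝔄(t,λ,β) dL(λ) + ∫ [ μℓ²·(𝔅(t,λ,0,0) − 2·𝔅(t,λ,0,β) + 𝔅(t,λ,β,β)) + 2·μℓ·μs·(𝔅(t,λ,0,β) − 𝔅(t,λ,β,β)) + μs²·𝔅(t,λ,β,β) ] dL(λ). Then R(t)/t² tends to ∫ ( μℓ·β/(β+λ) + μs·λ/(β+λ) )²·λ² dL(λ) as t → ∞. -/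

import Mathlib

open MeasureTheory Real Filter

/-- The quantity 𝔄(t,λ,β) from the paper. -/
noncomputable def frakA (t lam β : ℝ) : ℝ :=
  (lam / (β + lam) ^ 2) * (β - β * Real.exp (-((β + lam) * t)) + (β + lam) * lam * t)

/-- The quantity 𝔅(t,λ,Θ,Δ) from the paper. -/
noncomputable def frakB (t lam Θ Δ : ℝ) : ℝ :=
  lam ^ 2 *
    ∫ y in (0:ℝ)..t,
      Real.exp (-((lam + Θ) * y)) *
        ∫ v in (0:ℝ)..(t - y),
          Real.exp (-((lam + Δ) * v)) * ((lam * (t - y - v) + 2) ^ 2 - 2)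

/-!
Both `𝔄` and `λt - 𝔄` lie between `0` and `λt`, so their integrals are `O(t)` and do not contribute
to the limit. The quantity `𝔅(t,λ,Θ,Δ)` is `λ²` times a double convolution of a quadratic polynomial
with leading coefficient `λ²` against the kernels `exp (-(λ+Δ)v)` and `exp (-(λ+Θ)y)`. Convolving
with an integrable kernel multiplies a `t²` asymptotic by the total mass of the kernel, whence
`𝔅(t,λ,Θ,Δ) / t² → λ⁴ / ((λ+Δ)(λ+Θ))`. The integrand of the last term of `R` is
`μl² 𝔅(0,0) + 2 μl (μs-μl) 𝔅(0,β) + (μs-μl)² 𝔅(β,β)`, so its limit is the perfect square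
`λ² (μl + (μs-μl) λ/(λ+β))²`. The bound `|𝔅| ≤ 9 (λt)²` allows dominated convergence.
-/

open scoped Topology

section ExponentialConvolution

/-- The convolution of `F` with the exponential kernel `v ↦ exp (-a v)` over `[0, t]`. Up to the
factor `lam ^ 2`, the quantity `frakB` is the result of applying it twice to a quadratic
polynomial. -/
noncomputable def expConv (a : ℝ) (F : ℝ → ℝ) (t : ℝ) : ℝ :=
  ∫ v in (0 : ℝ)..t, Real.exp (-(a * v)) * F (t - v)

lemma continuous_expConv {X : Type*} [TopologicalSpace X] {a t : X → ℝ} {F : X → ℝ → ℝ}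
    (ha : Continuous a) (hF : Continuous (Function.uncurry F)) (ht : Continuous t) :
    Continuous fun x => expConv (a x) (F x) (t x) := by
  refine intervalIntegral.continuous_parametric_intervalIntegral_of_continuous ?_ ht
  have hF' : Continuous fun z : X × ℝ => F z.1 (t z.1 - z.2) :=
    hF.comp (f := fun z : X × ℝ => (z.1, t z.1 - z.2)) (by fun_prop)
  exact Continuous.mul (by fun_prop) hF'

lemma integrableOn_exp_neg_mul_Ioi {a : ℝ} (ha : 0 < a) :
    IntegrableOn (fun v : ℝ => Real.exp (-(a * v))) (Set.Ioi 0) := by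
  simpa only [neg_mul] using integrableOn_exp_mul_Ioi (neg_neg_of_pos ha) 0

lemma integral_exp_neg_mul_Ioi {a : ℝ} (ha : 0 < a) :
    ∫ v in Set.Ioi (0 : ℝ), Real.exp (-(a * v)) = a⁻¹ := by
  simpa [neg_mul] using integral_exp_mul_Ioi (neg_neg_of_pos ha) 0

lemma intervalIntegral_exp_neg_mul_le {a t : ℝ} (ha : 0 < a) (ht : 0 ≤ t) :
    ∫ v in (0 : ℝ)..t, Real.exp (-(a * v)) ≤ min t a⁻¹ := by
  refine le_min ?_ ?_
  · have hexp_le_one : ∀ v ∈ Set.Icc 0 t, Real.exp (-(a * v)) ≤ 1 := fun v hv =>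
      Real.exp_le_one_iff.2 (neg_nonpos.2 (mul_nonneg ha.le hv.1))
    have hexp : Continuous fun v => Real.exp (-(a * v)) := by fun_prop
    simpa using intervalIntegral.integral_mono_on ht
      (hexp.intervalIntegrable (μ := volume) 0 t) intervalIntegrable_const hexp_le_one
  · rw [intervalIntegral.integral_of_le ht, ← integral_exp_neg_mul_Ioi ha]
    exact setIntegral_mono_set (integrableOn_exp_neg_mul_Ioi ha)
      (.of_forall fun v => (Real.exp_pos _).le) Set.Ioc_subset_Ioi_self.eventuallyLE

lemma abs_expConv_le {F : ℝ → ℝ} {a t M : ℝ} (ha : 0 < a) (ht : 0 ≤ t)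
    (hF : ∀ x ∈ Set.Icc 0 t, |F x| ≤ M) : |expConv a F t| ≤ M * min t a⁻¹ := by
  have hM : 0 ≤ M := (abs_nonneg _).trans (hF 0 ⟨le_rfl, ht⟩)
  have hexp : Continuous fun v => M * Real.exp (-(a * v)) := by fun_prop
  calc |expConv a F t| ≤ ∫ v in (0 : ℝ)..t, M * Real.exp (-(a * v)) := by
        rw [← Real.norm_eq_abs, expConv]
        refine intervalIntegral.norm_integral_le_of_norm_le ht (.of_forall fun v hv => ?_)
          (hexp.intervalIntegrable 0 t)
        rw [norm_mul, Real.norm_of_nonneg (Real.exp_pos _).le, mul_comm]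
        have hFv : ‖F (t - v)‖ ≤ M := hF _ ⟨sub_nonneg.2 hv.2, sub_le_self t hv.1.le⟩
        gcongr
    _ = M * ∫ v in (0 : ℝ)..t, Real.exp (-(a * v)) := intervalIntegral.integral_const_mul _ _
    _ ≤ M * min t a⁻¹ := by gcongr; exact intervalIntegral_exp_neg_mul_le ha ht

end ExponentialConvolution

section PowerAsymptotics

lemma exists_abs_le_mul_one_add_pow {F : ℝ → ℝ} {c : ℝ} (n : ℕ) (hF : Continuous F)
    (hlim : Tendsto (fun x => F x / x ^ n) atTop (𝓝 c)) :
    ∃ C, ∀ x, 0 ≤ x → |F x| ≤ C * (1 + x) ^ n := by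
  obtain ⟨N, hN⟩ := eventually_atTop.1
    ((hlim.abs.eventually_le_const (lt_add_one |c|)).and (eventually_gt_atTop 0))
  obtain ⟨K, hK⟩ := isCompact_Icc.exists_bound_of_continuousOn (s := Set.Icc 0 N) hF.continuousOn
  refine ⟨max K (|c| + 1), fun x hx => ?_⟩
  rcases le_total x N with hxN | hxN
  · calc |F x| ≤ max K (|c| + 1) := (hK x ⟨hx, hxN⟩).trans (le_max_left _ _)
      _ ≤ max K (|c| + 1) * (1 + x) ^ n :=
        le_mul_of_one_le_right (by positivity) (one_le_pow₀ (by linarith))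
  · obtain ⟨hquot, hxpos⟩ := hN x hxN
    rw [abs_div, abs_of_pos (pow_pos hxpos n), div_le_iff₀ (pow_pos hxpos n)] at hquot
    refine hquot.trans ?_
    gcongr
    · exact le_max_right _ _
    · linarith

lemma tendsto_comp_sub_div_pow {F : ℝ → ℝ} {c : ℝ} (n : ℕ) (v : ℝ)
    (hlim : Tendsto (fun x => F x / x ^ n) atTop (𝓝 c)) :
    Tendsto (fun t => F (t - v) / t ^ n) atTop (𝓝 c) := by
  have hshift : Tendsto (fun t : ℝ => t - v) atTop atTop :=
    tendsto_atTop_add_const_right _ _ tendsto_id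
  have hratio : Tendsto (fun t : ℝ => (1 - v * t⁻¹) ^ n) atTop (𝓝 1) := by
    simpa using ((tendsto_inv_atTop_zero.const_mul v).const_sub 1).pow n
  have hprod := (hlim.comp hshift).mul hratio
  rw [mul_one] at hprod
  refine hprod.congr' ?_
  filter_upwards [eventually_gt_atTop 0, eventually_gt_atTop v] with t ht htv
  have hsub : t - v ≠ 0 := (sub_pos.2 htv).ne'
  have hfactor : 1 - v * t⁻¹ = (t - v) / t := by field_simp
  rw [Function.comp_apply, hfactor, div_pow]
  field_simp

lemma tendsto_intervalIntegral_mul_comp_sub_div_pow {k F : ℝ → ℝ} {c : ℝ} (n : ℕ)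
    (hk : IntegrableOn k (Set.Ioi 0)) (hF : Continuous F)
    (hlim : Tendsto (fun x => F x / x ^ n) atTop (𝓝 c)) :
    Tendsto (fun t => (∫ v in (0 : ℝ)..t, k v * F (t - v)) / t ^ n) atTop
      (𝓝 ((∫ v in Set.Ioi 0, k v) * c)) := by
  obtain ⟨C, hC⟩ := exists_abs_le_mul_one_add_pow n hF hlim
  have hC0 : 0 ≤ C := by simpa using (abs_nonneg _).trans (hC 0 le_rfl)
  have hdom : Tendsto (fun t : ℝ => ∫ v in Set.Ioi (0 : ℝ),
      (Set.Iic t).indicator (fun v => k v * (F (t - v) / t ^ n)) v) atTop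
      (𝓝 (∫ v in Set.Ioi (0 : ℝ), k v * c)) := by
    refine tendsto_integral_filter_of_dominated_convergence (fun v => ‖k v‖ * (C * 2 ^ n))
      (.of_forall fun t => ?_) ?_ (hk.norm.mul_const _) (.of_forall fun v => ?_)
    · exact (hk.aestronglyMeasurable.mul (Continuous.aestronglyMeasurable (by fun_prop))).indicator
        measurableSet_Iic
    · filter_upwards [eventually_ge_atTop 1] with t ht
      filter_upwards [ae_restrict_mem measurableSet_Ioi] with v (hv : 0 < v)
      by_cases hvt : v ≤ t
      · have htn : 0 < t ^ n := by positivity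
        rw [Set.indicator_of_mem (Set.mem_Iic.2 hvt), norm_mul, norm_div,
          Real.norm_of_nonneg htn.le]
        gcongr
        rw [div_le_iff₀ htn, mul_assoc, ← mul_pow]
        refine (hC _ (sub_nonneg.2 hvt)).trans ?_
        gcongr
        linarith
      · rw [Set.indicator_of_notMem (by simpa using hvt), norm_zero]
        positivity
    · refine ((tendsto_comp_sub_div_pow n v hlim).const_mul (k v)).congr' ?_
      filter_upwards [eventually_ge_atTop v] with t hvt
      rw [Set.indicator_of_mem (Set.mem_Iic.2 hvt)]
  rw [← integral_mul_const]
  refine hdom.congr' ?_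
  filter_upwards [eventually_ge_atTop 0] with t ht
  rw [intervalIntegral.integral_of_le ht, setIntegral_indicator measurableSet_Iic,
    ← integral_div, Set.Ioi_inter_Iic]
  simp only [mul_div_assoc]

lemma tendsto_expConv_div_pow {F : ℝ → ℝ} {a c : ℝ} (n : ℕ) (ha : 0 < a) (hF : Continuous F)
    (hlim : Tendsto (fun x => F x / x ^ n) atTop (𝓝 c)) :
    Tendsto (fun t => expConv a F t / t ^ n) atTop (𝓝 (c / a)) := by
  have h := tendsto_intervalIntegral_mul_comp_sub_div_pow n (integrableOn_exp_neg_mul_Ioi ha)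
    hF hlim
  rwa [integral_exp_neg_mul_Ioi ha, inv_mul_eq_div] at h

lemma tendsto_mul_add_sq_sub_div_sq (a b d : ℝ) :
    Tendsto (fun x : ℝ => ((a * x + b) ^ 2 - d) / x ^ 2) atTop (𝓝 (a ^ 2)) := by
  have h : Tendsto (fun x : ℝ => (a + b * x⁻¹) ^ 2 - d * x⁻¹ ^ 2) atTop (𝓝 (a ^ 2)) := by
    simpa using ((tendsto_inv_atTop_zero.const_mul b).const_add a).pow 2 |>.sub
      ((tendsto_inv_atTop_zero.pow 2).const_mul d)
  refine h.congr' ?_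
  filter_upwards [eventually_ne_atTop 0] with x hx
  field_simp

lemma tendsto_integral_div_sq_of_abs_le_mul {α : Type*} [MeasurableSpace α] {μ : Measure α}
    {f : ℝ → α → ℝ} {g : α → ℝ} (hg : Integrable g μ)
    (hf : ∀ᶠ t in atTop, ∀ᵐ x ∂μ, |f t x| ≤ g x * t) :
    Tendsto (fun t => (∫ x, f t x ∂μ) / t ^ 2) atTop (𝓝 0) := by
  have hmajorant : Tendsto (fun t : ℝ => (∫ x, g x ∂μ) * t⁻¹) atTop (𝓝 0) := by
    simpa using tendsto_inv_atTop_zero.const_mul (∫ x, g x ∂μ)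
  refine squeeze_zero_norm' ?_ hmajorant
  filter_upwards [eventually_gt_atTop 0, hf] with t ht hft
  calc ‖(∫ x, f t x ∂μ) / t ^ 2‖ = ‖∫ x, f t x ∂μ‖ / t ^ 2 := by
        rw [norm_div, Real.norm_of_nonneg (sq_nonneg t)]
    _ ≤ (∫ x, g x * t ∂μ) / t ^ 2 := by
        gcongr
        exact norm_integral_le_of_norm_le (hg.mul_const t) hft
    _ = (∫ x, g x ∂μ) * t⁻¹ := by
        rw [integral_mul_const]
        field_simp

end PowerAsymptotics

section FrakA

variable {t lam β : ℝ}

lemma frakA_nonneg (hlam : 0 ≤ lam) (hβ : 0 ≤ β) (ht : 0 ≤ t) : 0 ≤ frakA t lam β := by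
  have hexp : Real.exp (-((β + lam) * t)) ≤ 1 :=
    Real.exp_le_one_iff.2 (neg_nonpos.2 (by positivity))
  have hβexp : 0 ≤ β - β * Real.exp (-((β + lam) * t)) := by nlinarith
  unfold frakA
  positivity

lemma frakA_le_mul (hlam : 0 < lam) (hβ : 0 ≤ β) : frakA t lam β ≤ lam * t := by
  have hexp : 1 - (β + lam) * t ≤ Real.exp (-((β + lam) * t)) := one_sub_le_exp_neg _
  calc frakA t lam β ≤ lam / (β + lam) ^ 2 * ((β + lam) ^ 2 * t) := by
        unfold frakA
        gcongr
        nlinarith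
    _ = lam * t := by field_simp

lemma tendsto_integral_frakA_div_sq {L : Measure ℝ} (hpos : ∀ᵐ lam ∂L, 0 < lam)
    (hint : Integrable (fun lam : ℝ => lam) L) (hβ : 0 ≤ β) :
    Tendsto (fun t => (∫ lam, frakA t lam β ∂L) / t ^ 2) atTop (𝓝 0) := by
  refine tendsto_integral_div_sq_of_abs_le_mul hint ?_
  filter_upwards [eventually_ge_atTop 0] with t ht
  filter_upwards [hpos] with lam hlam
  rw [abs_of_nonneg (frakA_nonneg hlam.le hβ ht)]
  exact frakA_le_mul hlam hβ

lemma tendsto_integral_mul_sub_frakA_div_sq {L : Measure ℝ} (hpos : ∀ᵐ lam ∂L, 0 < lam)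
    (hint : Integrable (fun lam : ℝ => lam) L) (hβ : 0 ≤ β) :
    Tendsto (fun t => (∫ lam, (lam * t - frakA t lam β) ∂L) / t ^ 2) atTop (𝓝 0) := by
  refine tendsto_integral_div_sq_of_abs_le_mul hint ?_
  filter_upwards [eventually_ge_atTop 0] with t ht
  filter_upwards [hpos] with lam hlam
  rw [abs_of_nonneg (sub_nonneg.2 (frakA_le_mul hlam hβ))]
  exact sub_le_self _ (frakA_nonneg hlam.le hβ ht)

end FrakA

section FrakB

variable {t lam Θ Δ : ℝ}

lemma frakB_eq_expConv_expConv (t lam Θ Δ : ℝ) : frakB t lam Θ Δ =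
    lam ^ 2 * expConv (lam + Θ) (expConv (lam + Δ) fun z => (lam * z + 2) ^ 2 - 2) t := rfl

lemma continuous_frakB (t Θ Δ : ℝ) : Continuous fun lam => frakB t lam Θ Δ := by
  refine (continuous_pow 2).mul (continuous_expConv
    (F := fun lam => expConv (lam + Δ) fun z => (lam * z + 2) ^ 2 - 2)
    (by fun_prop) ?_ continuous_const)
  exact continuous_expConv (F := fun (p : ℝ × ℝ) z => (p.1 * z + 2) ^ 2 - 2)
    (by fun_prop) (by fun_prop) continuous_snd

-- The factor `min t lam⁻¹` gained in each convolution makes the bound quadratic in `lam`, so that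
-- a finite second moment suffices to integrate it.
lemma abs_frakB_le (hlam : 0 < lam) (hΘ : 0 ≤ Θ) (hΔ : 0 ≤ Δ) (ht : 0 ≤ t) :
    |frakB t lam Θ Δ| ≤ 9 * (lam * t) ^ 2 := by
  have hpoly : ∀ x ∈ Set.Icc 0 t, |(lam * x + 2) ^ 2 - 2| ≤ (lam * t + 2) ^ 2 := by
    intro x hx
    have hlamx : 0 ≤ lam * x := mul_nonneg hlam.le hx.1
    have hlamxt : lam * x ≤ lam * t := by gcongr; exact hx.2
    rw [abs_le]
    constructor <;> nlinarith
  have hinner : ∀ x ∈ Set.Icc 0 t, |expConv (lam + Δ) (fun z => (lam * z + 2) ^ 2 - 2) x|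
      ≤ (lam * t + 2) ^ 2 * min t lam⁻¹ := by
    intro x hx
    refine (abs_expConv_le (by linarith) hx.1 fun z hz => hpoly z ⟨hz.1, hz.2.trans hx.2⟩).trans ?_
    gcongr
    · exact hx.2
    · linarith
  have hscalar : (lam * t + 2) * (lam * min t lam⁻¹) ≤ 3 * (lam * t) := by
    have hlamt : 0 ≤ lam * t := by positivity
    rw [mul_min_of_nonneg _ _ hlam.le, mul_inv_cancel₀ hlam.ne']
    rcases min_cases (lam * t) 1 with ⟨h, hle⟩ | ⟨h, hlt⟩ <;> rw [h] <;> nlinarith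
  calc |frakB t lam Θ Δ|
      = lam ^ 2 * |expConv (lam + Θ) (expConv (lam + Δ) fun z => (lam * z + 2) ^ 2 - 2) t| := by
        rw [frakB_eq_expConv_expConv, abs_mul, abs_of_nonneg (sq_nonneg lam)]
    _ ≤ lam ^ 2 * ((lam * t + 2) ^ 2 * min t lam⁻¹ * min t lam⁻¹) := by
        gcongr
        refine (abs_expConv_le (by linarith) ht hinner).trans ?_
        gcongr
        linarith
    _ = ((lam * t + 2) * (lam * min t lam⁻¹)) ^ 2 := by ring
    _ ≤ (3 * (lam * t)) ^ 2 := by gcongr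
    _ = 9 * (lam * t) ^ 2 := by ring

lemma tendsto_frakB_div_sq (hΘ : 0 < lam + Θ) (hΔ : 0 < lam + Δ) :
    Tendsto (fun t => frakB t lam Θ Δ / t ^ 2) atTop
      (𝓝 (lam ^ 4 / ((lam + Δ) * (lam + Θ)))) := by
  have hinner := tendsto_expConv_div_pow 2 hΔ (by fun_prop) (tendsto_mul_add_sq_sub_div_sq lam 2 2)
  have houter := tendsto_expConv_div_pow 2 hΘ
    (continuous_expConv continuous_const (by fun_prop) continuous_id) hinner
  convert houter.const_mul (lam ^ 2) using 1
  · ext t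
    exact mul_div_assoc _ _ _
  · congr 1
    field_simp

end FrakB

section DriftForm

/-- The integrand of the last integral in `R`, with `p`, `q` standing for `μl`, `μs`. -/
noncomputable def driftForm (β p q t lam : ℝ) : ℝ :=
  p ^ 2 * (frakB t lam 0 0 - 2 * frakB t lam 0 β + frakB t lam β β)
    + 2 * p * q * (frakB t lam 0 β - frakB t lam β β)
    + q ^ 2 * frakB t lam β β

variable {β t lam : ℝ}

lemma continuous_driftForm (β p q t : ℝ) : Continuous (driftForm β p q t) := by
  have h₀₀ := continuous_frakB t 0 0
  have h₀β := continuous_frakB t 0 β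
  have hββ := continuous_frakB t β β
  unfold driftForm
  fun_prop

lemma driftForm_eq (β p q t lam : ℝ) : driftForm β p q t lam =
    p ^ 2 * frakB t lam 0 0 + 2 * (p * (q - p)) * frakB t lam 0 β
      + (q - p) ^ 2 * frakB t lam β β := by
  unfold driftForm
  ring

lemma abs_driftForm_le (p q : ℝ) (hlam : 0 < lam) (hβ : 0 ≤ β) (ht : 0 ≤ t) :
    |driftForm β p q t lam| ≤ 9 * (|p| + |q - p|) ^ 2 * (lam * t) ^ 2 := by
  calc |driftForm β p q t lam|
      ≤ |p| ^ 2 * |frakB t lam 0 0| + 2 * (|p| * |q - p|) * |frakB t lam 0 β|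
        + |q - p| ^ 2 * |frakB t lam β β| := by
        rw [driftForm_eq]
        refine (abs_add_three _ _ _).trans_eq ?_
        simp only [abs_mul, abs_pow, abs_two]
    _ ≤ |p| ^ 2 * (9 * (lam * t) ^ 2) + 2 * (|p| * |q - p|) * (9 * (lam * t) ^ 2)
        + |q - p| ^ 2 * (9 * (lam * t) ^ 2) := by
        gcongr
        · exact abs_frakB_le hlam le_rfl le_rfl ht
        · exact abs_frakB_le hlam le_rfl hβ ht
        · exact abs_frakB_le hlam hβ hβ ht
    _ = 9 * (|p| + |q - p|) ^ 2 * (lam * t) ^ 2 := by ring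

lemma tendsto_driftForm_div_sq (p q : ℝ) (hlam : 0 < lam) (hβ : 0 ≤ β) :
    Tendsto (fun t => driftForm β p q t lam / t ^ 2) atTop
      (𝓝 ((p * β / (β + lam) + q * lam / (β + lam)) ^ 2 * lam ^ 2)) := by
  have hlam₀ : 0 < lam + 0 := by linarith
  have hlamβ : 0 < lam + β := by linarith
  have hsum := ((tendsto_frakB_div_sq hlam₀ hlam₀).const_mul (p ^ 2)).add
    ((tendsto_frakB_div_sq hlam₀ hlamβ).const_mul (2 * (p * (q - p)))) |>.add
    ((tendsto_frakB_div_sq hlamβ hlamβ).const_mul ((q - p) ^ 2))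
  convert hsum using 1
  · ext t
    rw [driftForm_eq]
    ring
  · congr 1
    rw [add_comm β lam, add_zero]
    field_simp
    ring

lemma tendsto_integral_driftForm_div_sq {L : Measure ℝ} (p q : ℝ)
    (hpos : ∀ᵐ lam ∂L, 0 < lam) (hint : Integrable (fun lam : ℝ => lam ^ 2) L) (hβ : 0 ≤ β) :
    Tendsto (fun t => (∫ lam, driftForm β p q t lam ∂L) / t ^ 2) atTop
      (𝓝 (∫ lam, (p * β / (β + lam) + q * lam / (β + lam)) ^ 2 * lam ^ 2 ∂L)) := by
  simp only [← integral_div]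
  refine tendsto_integral_filter_of_dominated_convergence
    (fun lam => 9 * (|p| + |q - p|) ^ 2 * lam ^ 2)
    (.of_forall fun t => ((continuous_driftForm β p q t).div_const _).aestronglyMeasurable)
    ?_ (hint.const_mul _) ?_
  · filter_upwards [eventually_gt_atTop 0] with t ht
    filter_upwards [hpos] with lam hlam
    rw [norm_div, Real.norm_of_nonneg (sq_nonneg t), div_le_iff₀ (by positivity), mul_assoc,
      ← mul_pow]
    exact abs_driftForm_le p q hlam hβ ht.le
  · filter_upwards [hpos] with lam hlam
    exact tendsto_driftForm_div_sq p q hlam hβ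

end DriftForm

theorem stmt_12_general {L : Measure ℝ} (hpos : ∀ᵐ lam ∂L, 0 < lam)
    (hint₁ : Integrable (fun lam : ℝ => lam) L)
    (hint₂ : Integrable (fun lam : ℝ => lam ^ 2) L)
    {β sl ss μl μs : ℝ} (hβ : 0 ≤ β) {R : ℝ → ℝ}
    (hR : ∀ t, R t
        = sl * ∫ lam, (lam * t - frakA t lam β) ∂L
          + ss * ∫ lam, frakA t lam β ∂L
          + ∫ lam,
              (μl ^ 2 * (frakB t lam 0 0 - 2 * frakB t lam 0 β + frakB t lam β β)
                + 2 * μl * μs * (frakB t lam 0 β - frakB t lam β β)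
                + μs ^ 2 * frakB t lam β β) ∂L) :
    Tendsto (fun t : ℝ => R t / t ^ 2) atTop
      (𝓝 (∫ lam, (μl * β / (β + lam) + μs * lam / (β + lam)) ^ 2 * lam ^ 2 ∂L)) := by
  have hlong := tendsto_integral_mul_sub_frakA_div_sq hpos hint₁ hβ
  have hshort := tendsto_integral_frakA_div_sq hpos hint₁ hβ
  have hdrift := tendsto_integral_driftForm_div_sq μl μs hpos hint₂ hβ
  have hsum := ((hlong.const_mul sl).add (hshort.const_mul ss)).add hdrift
  simp only [mul_zero, zero_add] at hsum
  refine hsum.congr fun t => ?_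
  rw [hR t, add_div, add_div, mul_div_assoc, mul_div_assoc]
  rfl

theorem stmt_12 (L : Measure ℝ) [IsProbabilityMeasure L] (hsupp : L (Set.Iic 0) = 0)
    (hint : Integrable (fun lam : ℝ => lam ^ 2) L)
    (β sl ss μl μs : ℝ) (hβ : 0 ≤ β)
    (hsl : 0 ≤ sl) (hss : 0 ≤ ss) (hμl : 0 ≤ μl) (hμs : 0 ≤ μs)
    (R : ℝ → ℝ)
    (hR : ∀ t, R t
        = sl * ∫ lam, (lam * t - frakA t lam β) ∂L
          + ss * ∫ lam, frakA t lam β ∂L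
          + ∫ lam,
              (μl ^ 2 * (frakB t lam 0 0 - 2 * frakB t lam 0 β + frakB t lam β β)
                + 2 * μl * μs * (frakB t lam 0 β - frakB t lam β β)
                + μs ^ 2 * frakB t lam β β) ∂L) :
    Tendsto (fun t : ℝ => R t / t ^ 2) atTop
      (nhds (∫ lam, (μl * β / (β + lam) + μs * lam / (β + lam)) ^ 2 * lam ^ 2 ∂L)) := by
  have hpos : ∀ᵐ lam ∂L, 0 < lam := by simpa [ae_iff, Set.Iic] using hsupp
  have hL2 : MemLp id 2 L := (memLp_two_iff_integrable_sq aestronglyMeasurable_id).2 hint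
  exact stmt_12_general hpos (hL2.integrable one_le_two) hint hβ hR
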